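/- For a mechanism M from (X,∼) to probability measures on Y and ε ≥ 0, define the accounting oracle AO_M(ε) = inf{δ ∈ [0,1] : M is (ε,δ)-DP}. If M and M' are two mechanisms from (X,∼) to probability measures on Y with sup_{x∈X} TV(M(x), M'(x)) ≤ d for some d ≥ 0, then |AO_M(ε) − AO_{M'}(ε)| ≤ (1 + e^ε)·d. -/

import Mathlib

/-!
The infimum defining the accounting oracle is attained: for fixed `A`, `x`, `x'` the privacy
inequality is closed in `δ`, so `M'` is `(ε, AO_{M'}(ε))`-DP. Replacing `M'` by `M` changes the left
side of each privacy inequality by at most `d` and its right side by at most `e^ε * d`, so `M` is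
`(ε, AO_{M'}(ε) + (1 + e^ε) * d)`-DP, which bounds `AO_M(ε)`. The roles of `M` and `M'` are
symmetric.
-/

open MeasureTheory Real

/-- `(ε,δ)`-differential privacy of a mechanism `M` with respect to a neighbouring
relation `neigh`. -/
def IsDP {X Y : Type*} [MeasurableSpace Y] (neigh : X → X → Prop)
    (M : X → Measure Y) (ε δ : ℝ) : Prop :=
  ∀ A : Set Y, MeasurableSet A → ∀ x x', neigh x x' →
    ((M x) A).toReal ≤ Real.exp ε * ((M x') A).toReal + δ

/-- Total variation distance between two measures:
`TV(P,Q) = sup_A |P(A) − Q(A)|` over measurable sets `A`. -/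
noncomputable def tvDist {α : Type*} [MeasurableSpace α] (P Q : Measure α) : ℝ :=
  ⨆ A : {s : Set α // MeasurableSet s}, |(P A.1).toReal - (Q A.1).toReal|

/-- The accounting oracle: `AO_M(ε)` is the smallest `δ ∈ [0,1]` such that `M` is
`(ε,δ)`-DP. -/
noncomputable def AO {X Y : Type*} [MeasurableSpace Y] (neigh : X → X → Prop)
    (M : X → Measure Y) (ε : ℝ) : ℝ :=
  sInf {δ : ℝ | δ ∈ Set.Icc (0 : ℝ) 1 ∧ IsDP neigh M ε δ}

section TotalVariation

variable {α : Type*} [MeasurableSpace α]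

lemma tvDist_comm (P Q : Measure α) : tvDist P Q = tvDist Q P := by
  simp only [tvDist, abs_sub_comm]

lemma abs_toReal_sub_toReal_le_tvDist (P Q : Measure α) [IsFiniteMeasure P] [IsFiniteMeasure Q]
    {A : Set α} (hA : MeasurableSet A) : |(P A).toReal - (Q A).toReal| ≤ tvDist P Q := by
  have hbdd : BddAbove (Set.range fun B : {s : Set α // MeasurableSet s} ↦
      |(P B.1).toReal - (Q B.1).toReal|) := by
    refine ⟨max (P.real Set.univ) (Q.real Set.univ), ?_⟩
    rintro _ ⟨B, rfl⟩
    exact abs_sub_le_of_nonneg_of_le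
      measureReal_nonneg (le_max_of_le_left (measureReal_mono B.1.subset_univ))
      measureReal_nonneg (le_max_of_le_right (measureReal_mono B.1.subset_univ))
  exact le_ciSup hbdd ⟨A, hA⟩

end TotalVariation

section AccountingOracle

variable {X Y : Type*} [MeasurableSpace Y] {neigh : X → X → Prop} {M M' : X → Measure Y}
  {ε δ d : ℝ}

lemma isDP_one (hM : ∀ x, M x Set.univ ≤ 1) : IsDP neigh M ε 1 := by
  intro A _ x x' _
  have hle : (M x A).toReal ≤ 1 :=
    ENNReal.toReal_le_of_le_ofReal zero_le_one <|
      ((measure_mono A.subset_univ).trans (hM x)).trans_eq ENNReal.ofReal_one.symm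
  have hnonneg : 0 ≤ exp ε * (M x' A).toReal := by positivity
  linarith

lemma IsDP.of_tvDist_le [∀ x, IsFiniteMeasure (M x)] [∀ x, IsFiniteMeasure (M' x)]
    (h : IsDP neigh M' ε δ) (hTV : ∀ x, tvDist (M x) (M' x) ≤ d) :
    IsDP neigh M ε (δ + (1 + exp ε) * d) := by
  intro A hA x x' hxx'
  have hclose (z : X) : |(M z A).toReal - (M' z A).toReal| ≤ d :=
    (abs_toReal_sub_toReal_le_tvDist (M z) (M' z) hA).trans (hTV z)
  have hx : (M x A).toReal ≤ (M' x A).toReal + d := by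
    linarith [(abs_le.1 (hclose x)).2]
  have hx' : (M' x' A).toReal ≤ (M x' A).toReal + d := by
    linarith [(abs_le.1 (hclose x')).1]
  calc (M x A).toReal
      ≤ (M' x A).toReal + d := hx
    _ ≤ exp ε * (M' x' A).toReal + δ + d := by gcongr; exact h A hA x x' hxx'
    _ ≤ exp ε * ((M x' A).toReal + d) + δ + d := by gcongr
    _ = exp ε * (M x' A).toReal + (δ + (1 + exp ε) * d) := by ring

lemma AO_nonneg : 0 ≤ AO neigh M ε :=
  Real.sInf_nonneg fun _ hδ ↦ hδ.1.1

lemma isDP_AO (hM : ∀ x, M x Set.univ ≤ 1) : IsDP neigh M ε (AO neigh M ε) := by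
  intro A hA x x' hxx'
  rw [← sub_le_iff_le_add']
  exact le_csInf ⟨1, ⟨zero_le_one, le_rfl⟩, isDP_one hM⟩ fun δ hδ ↦
    sub_le_iff_le_add'.2 (hδ.2 A hA x x' hxx')

lemma AO_le_of_isDP (hM : ∀ x, M x Set.univ ≤ 1) (hδ : 0 ≤ δ) (h : IsDP neigh M ε δ) :
    AO neigh M ε ≤ δ := by
  -- `δ` may exceed `1`, but `min δ 1` is always admissible in the infimum.
  have hmin : IsDP neigh M ε (min δ 1) := min_rec' (IsDP neigh M ε) h (isDP_one hM)
  calc AO neigh M ε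
      ≤ min δ 1 := csInf_le ⟨0, fun _ h' ↦ h'.1.1⟩
        ⟨⟨le_min hδ zero_le_one, min_le_right δ 1⟩, hmin⟩
    _ ≤ δ := min_le_left δ 1

lemma AO_le_AO_add (hM : ∀ x, M x Set.univ ≤ 1) (hM' : ∀ x, M' x Set.univ ≤ 1) (hd : 0 ≤ d)
    (hTV : ∀ x, tvDist (M x) (M' x) ≤ d) :
    AO neigh M ε ≤ AO neigh M' ε + (1 + exp ε) * d := by
  have (x : X) : IsFiniteMeasure (M x) := ⟨(hM x).trans_lt ENNReal.one_lt_top⟩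
  have (x : X) : IsFiniteMeasure (M' x) := ⟨(hM' x).trans_lt ENNReal.one_lt_top⟩
  have hnonneg : 0 ≤ AO neigh M' ε + (1 + exp ε) * d :=
    add_nonneg AO_nonneg (by positivity)
  exact AO_le_of_isDP hM hnonneg ((isDP_AO hM').of_tvDist_le hTV)

theorem abs_AO_sub_AO_le_general (hM : ∀ x, M x Set.univ ≤ 1) (hM' : ∀ x, M' x Set.univ ≤ 1)
    (hd : 0 ≤ d) (hTV : ∀ x, tvDist (M x) (M' x) ≤ d) :
    |AO neigh M ε - AO neigh M' ε| ≤ (1 + exp ε) * d := by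
  have hTV' (x : X) : tvDist (M' x) (M x) ≤ d := (tvDist_comm _ _).trans_le (hTV x)
  exact abs_sub_le_iff.2 ⟨sub_le_iff_le_add'.2 (AO_le_AO_add hM hM' hd hTV),
    sub_le_iff_le_add'.2 (AO_le_AO_add hM' hM hd hTV')⟩

end AccountingOracle

/-- If `sup_x TV(M(x), M'(x)) ≤ d`, then the accounting oracles of `M` and `M'` differ by
at most `(1 + e^ε)·d`. -/
theorem abs_AO_sub_AO_le {X Y : Type*} [MeasurableSpace Y] (neigh : X → X → Prop)
    (M M' : X → Measure Y)
    (hM : ∀ x, IsProbabilityMeasure (M x)) (hM' : ∀ x, IsProbabilityMeasure (M' x))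
    (ε d : ℝ) (hε : 0 ≤ ε) (hd : 0 ≤ d)
    (hTV : ∀ x, tvDist (M x) (M' x) ≤ d) :
    |AO neigh M ε - AO neigh M' ε| ≤ (1 + Real.exp ε) * d :=
  abs_AO_sub_AO_le_general (fun x ↦ (hM x).measure_univ.le) (fun x ↦ (hM' x).measure_univ.le) hd hTV
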